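/- The building block ρ_T is PPT: for every nonempty finite set T, the matrix ρ_T = ⊗_{e∈T} (I_e − Φ_e) + (d+1)(d−1)^{|T|−1} · ⊗_{e∈T} Φ_e on ⊗_{e∈T} (ℂ^d ⊗ ℂ^d) is positive semidefinite, and its partial transpose ρ_T^{Γ_T} (partial transpose of the first ℂ^d factor of every edge in T) is also positive semidefinite. -/

import Mathlib

open Matrix Finset
open scoped ComplexOrder

/-- The projector onto the maximally entangled state on `ℂ^d ⊗ ℂ^d`. -/
noncomputable def phiM (d : ℕ) : Matrix (Fin d × Fin d) (Fin d × Fin d) ℂ :=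
  Matrix.of fun p q => if p.1 = p.2 ∧ q.1 = q.2 then (1 : ℂ) / d else 0

/-- `Γ_K`: partial transpose of the first `ℂ^d` factor of every edge in `K`. -/
def ptK (d : ℕ) (E : Type*) [DecidableEq E] (K : Finset E)
    (M : Matrix (E → Fin d × Fin d) (E → Fin d × Fin d) ℂ) :
    Matrix (E → Fin d × Fin d) (E → Fin d × Fin d) ℂ :=
  Matrix.of fun x y =>
    M (fun e => if e ∈ K then ((y e).1, (x e).2) else x e)
      (fun e => if e ∈ K then ((x e).1, (y e).2) else y e)

/-- The building block `ρ_T = ⊗_{e∈T}(I_e − Φ_e) + (d+1)(d−1)^{|T|−1}·⊗_{e∈T} Φ_e`. -/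
noncomputable def rhoT (d : ℕ) (T : Type*) [Fintype T] [DecidableEq T] :
    Matrix (T → Fin d × Fin d) (T → Fin d × Fin d) ℂ :=
  Matrix.of fun x y =>
    (∏ e, ((1 : Matrix (Fin d × Fin d) (Fin d × Fin d) ℂ) - phiM d) (x e) (y e))
      + ((d : ℂ) + 1) * ((d : ℂ) - 1) ^ (Fintype.card T - 1) * ∏ e, phiM d (x e) (y e)

lemma tensor_psd {T n : Type*} [Fintype T] [DecidableEq T] [Fintype n] [DecidableEq n]
    (P : T → Matrix n n ℂ) (h : ∀ e, (P e)ᴴ * P e = P e) :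
    (Matrix.of fun x y : T → n => ∏ e, P e (x e) (y e)).PosSemidef := by
  have : (Matrix.of fun x y : T → n => ∏ e, P e (x e) (y e)) =
      (Matrix.of fun x y : T → n => ∏ e, P e (x e) (y e))ᴴ *
      (Matrix.of fun x y : T → n => ∏ e, P e (x e) (y e)) := by
    ext x y
    simp only [Matrix.mul_apply, Matrix.conjTranspose_apply, Matrix.of_apply, star_prod,
      ← Finset.prod_mul_distrib]
    rw [← Fintype.prod_sum (fun e (j : n) => star (P e j (x e)) * P e j (y e))]
    refine Finset.prod_congr rfl fun e _ => ?_
    conv_lhs => rw [← h e]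
    simp [Matrix.mul_apply]
  rw [this]
  exact Matrix.posSemidef_conjTranspose_mul_self _

lemma phi_herm (d : ℕ) : (phiM d)ᴴ = phiM d := by
  ext p q
  simp only [phiM, Matrix.conjTranspose_apply, Matrix.of_apply, and_comm]
  split_ifs <;> simp

lemma phi_sq (d : ℕ) (hd : 2 ≤ d) : phiM d * phiM d = phiM d := by
  have hd0 : (d : ℂ) ≠ 0 := by norm_cast; omega
  ext p q
  simp only [phiM, Matrix.mul_apply, Matrix.of_apply, Fintype.sum_prod_type]
  by_cases hp : p.1 = p.2 <;> by_cases hq : q.1 = q.2 <;> simp [hp, hq, hd0]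

/-- The flip. -/
def flipM (d : ℕ) : Matrix (Fin d × Fin d) (Fin d × Fin d) ℂ :=
  Matrix.of fun p q => if q = p.swap then 1 else 0

lemma flip_herm (d : ℕ) : (flipM d)ᴴ = flipM d := by
  ext p q
  have : p = q.swap ↔ q = p.swap := by
    constructor <;> (rintro rfl; simp)
  simp only [flipM, Matrix.conjTranspose_apply, Matrix.of_apply, this]
  split_ifs <;> simp

lemma flip_sq (d : ℕ) : flipM d * flipM d = 1 := by
  ext p q
  simp only [flipM, Matrix.mul_apply, Matrix.one_apply, Matrix.of_apply, ite_mul, one_mul, zero_mul,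
    Finset.sum_ite_eq', Finset.sum_ite_eq, Finset.mem_univ, if_true, Prod.swap_swap, eq_comm (a := q)]

/-- Symmetric (`s = 1`) or antisymmetric (`s = -1`) projector. -/
noncomputable def prM (d : ℕ) (s : ℝ) : Matrix (Fin d × Fin d) (Fin d × Fin d) ℂ :=
  (1 / 2 : ℂ) • (1 + (s : ℂ) • flipM d)

lemma pr_proj (d : ℕ) (s : ℝ) (hs : s * s = 1) : (prM d s)ᴴ * prM d s = prM d s := by
  have hs' : (s : ℂ) * s = 1 := by exact_mod_cast hs
  simp only [prM, Matrix.conjTranspose_smul, Matrix.conjTranspose_add,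
    Matrix.conjTranspose_one, flip_herm, Matrix.smul_mul, Matrix.mul_smul, Matrix.add_mul,
    Matrix.mul_add, flip_sq, smul_smul, Matrix.one_mul, Matrix.mul_one, smul_add]
  ext p q
  simp only [Matrix.add_apply, Matrix.smul_apply, smul_eq_mul]
  simp
  linear_combination (1/4 : ℂ) * (1 : Matrix (Fin d × Fin d) (Fin d × Fin d) ℂ) p q * hs'

lemma coef_nonneg (d : ℝ) (hd : 2 ≤ d) (a b n : ℕ) (hn : a + b = n) (h1 : 1 ≤ n) :
    0 ≤ ((d - 1) / d) ^ a * ((d + 1) / d) ^ b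
      + (d + 1) * (d - 1) ^ (n - 1) * ((1 / d) ^ a * (-1 / d) ^ b) := by
  have e : ((d - 1) / d) ^ a * ((d + 1) / d) ^ b
      + (d + 1) * (d - 1) ^ (n - 1) * ((1 / d) ^ a * (-1 / d) ^ b)
      = ((d - 1) ^ a * (d + 1) ^ b + (d + 1) * (d - 1) ^ (n - 1) * (-1) ^ b) / (d ^ a * d ^ b) := by
    have : d ≠ 0 := by positivity
    simp only [div_pow, one_pow]
    field_simp
  rw [e]
  have hp : 0 ≤ d - 1 := by linarith
  apply div_nonneg _ (by positivity)
  rcases b with _ | b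
  · simp; positivity
  · have hn' : n - 1 = a + b := by omega
    have h2 : (d - 1) ^ b ≤ (d + 1) ^ b := by gcongr; linarith
    have h3 : (d + 1) * (d - 1) ^ (n - 1) ≤ (d - 1) ^ a * (d + 1) ^ (b + 1) := by
      rw [hn', pow_add, pow_succ]
      calc _ = ((d + 1) * (d - 1) ^ a) * (d - 1) ^ b := by ring
        _ ≤ ((d + 1) * (d - 1) ^ a) * (d + 1) ^ b := by gcongr
        _ = _ := by ring
    have h4 : 0 ≤ (d + 1) * (d - 1) ^ (n - 1) := by positivity
    rcases neg_one_pow_eq_or ℝ (b + 1) with h | h <;> rw [h] <;> linarith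

/-- For every nonempty finite `T`, the matrix `ρ_T` is positive semidefinite,
and so is its partial transpose `ρ_T^{Γ_T}`. -/
theorem stmt_13 (d : ℕ) (hd : 2 ≤ d) (T : Type*) [Fintype T] [DecidableEq T] [Nonempty T] :
    (rhoT d T).PosSemidef ∧ (ptK d T Finset.univ (rhoT d T)).PosSemidef := by
  have hd0 : (d : ℂ) ≠ 0 := by norm_cast; omega
  have hdR : (2 : ℝ) ≤ d := by exact_mod_cast hd
  constructor
  · have h1 := tensor_psd (T := T) (fun _ => 1 - phiM d) (fun _ => by
      simp [phi_herm, Matrix.sub_mul, Matrix.mul_sub, phi_sq d hd])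
    have h2 := tensor_psd (T := T) (fun _ => phiM d) (fun _ => by
      simp [phi_herm, phi_sq d hd])
    have hc : (0 : ℂ) ≤ ((d : ℂ) + 1) * ((d : ℂ) - 1) ^ (Fintype.card T - 1) := by
      have h0 : (0:ℝ) ≤ d - 1 := by linarith
      have : (0 : ℝ) ≤ ((d : ℝ) + 1) * ((d : ℝ) - 1) ^ (Fintype.card T - 1) := by positivity
      exact_mod_cast Complex.zero_le_real.mpr this
    exact h1.add (h2.smul hc)
  · have key : ptK d T Finset.univ (rhoT d T) = ∑ K ∈ (Finset.univ : Finset T).powerset,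
        (((((d:ℝ) - 1) / d) ^ #K * (((d:ℝ) + 1) / d) ^ #(univ \ K)
      + ((d:ℝ) + 1) * ((d:ℝ) - 1) ^ (Fintype.card T - 1) *
          ((1 / (d:ℝ)) ^ #K * (-1 / (d:ℝ)) ^ #(univ \ K)) : ℝ) : ℂ) •
        Matrix.of fun x y : T → Fin d × Fin d =>
          ∏ e, (if e ∈ K then prM d 1 else prM d (-1)) (x e) (y e) := by
      ext x y
      have e1 : ∀ p q : Fin d × Fin d,
          ((1 : Matrix (Fin d × Fin d) (Fin d × Fin d) ℂ) - phiM d) (q.1, p.2) (p.1, q.2)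
          = (((d:ℂ) - 1) / d) * prM d 1 p q + (((d:ℂ) + 1) / d) * prM d (-1) p q := by
        rintro ⟨p1, p2⟩ ⟨q1, q2⟩
        simp only [phiM, prM, flipM, Matrix.sub_apply, Matrix.one_apply, Matrix.of_apply,
          Matrix.add_apply, Matrix.smul_apply, smul_eq_mul, Prod.mk.injEq, Prod.swap_prod_mk]
        have a1 : (q1 = p1 ∧ p2 = q2) ↔ (p1 = q1 ∧ p2 = q2) := by rw [eq_comm]
        have a2 : (q1 = p2 ∧ p1 = q2) ↔ (q1 = p2 ∧ q2 = p1) := by rw [eq_comm (a := p1)]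
        simp only [a1, a2]
        split_ifs <;> push_cast <;> field_simp <;> ring
      have e2 : ∀ p q : Fin d × Fin d, phiM d (q.1, p.2) (p.1, q.2)
          = (1 / (d:ℂ)) * prM d 1 p q + (-1 / (d:ℂ)) * prM d (-1) p q := by
        rintro ⟨p1, p2⟩ ⟨q1, q2⟩
        simp only [phiM, prM, flipM, Matrix.one_apply, Matrix.of_apply,
          Matrix.add_apply, Matrix.smul_apply, smul_eq_mul, Prod.mk.injEq, Prod.swap_prod_mk]
        have a2 : (q1 = p2 ∧ p1 = q2) ↔ (q1 = p2 ∧ q2 = p1) := by rw [eq_comm (a := p1)]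
        simp only [a2]
        split_ifs <;> push_cast <;> field_simp <;> ring
      simp only [ptK, rhoT, Matrix.of_apply, Finset.mem_univ, if_true, e1, e2, Finset.prod_add,
        Matrix.sum_apply, Matrix.smul_apply, smul_eq_mul]
      rw [Finset.mul_sum, ← Finset.sum_add_distrib]
      refine Finset.sum_congr rfl fun K _ => ?_
      have e3 : ∏ e, (if e ∈ K then prM d 1 else prM d (-1)) (x e) (y e)
          = (∏ e ∈ K, prM d 1 (x e) (y e)) * ∏ e ∈ univ \ K, prM d (-1) (x e) (y e) := by
        rw [← Finset.prod_sdiff (Finset.subset_univ K), mul_comm]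
        congr 1
        · exact Finset.prod_congr rfl fun e he => by rw [if_pos he]
        · exact Finset.prod_congr rfl fun e he => by rw [if_neg (Finset.mem_sdiff.mp he).2]
      rw [e3]
      simp only [Finset.prod_mul_distrib, Finset.prod_const]
      push_cast
      ring
    rw [key]
    refine Matrix.posSemidef_sum _ fun K _ => ?_
    refine (tensor_psd _ fun e => ?_).smul (Complex.zero_le_real.mpr
      (coef_nonneg d hdR _ _ _ ?_ Fintype.card_pos))
    · split_ifs <;> exact pr_proj d _ (by norm_num)
    · rw [add_comm, Finset.card_sdiff_add_card_eq_card (Finset.subset_univ K), Finset.card_univ]
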